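/- arXiv:1210.6237 — 3 statements merged into one kernel-verified Lean document; each statement's English description precedes it below -/
import Mathlib

section
/- Suppose F is holomorphic on ℂ₊ and there exist constants B, γ > 0 such that |F(z)| ≤ B for all z ∈ ℂ₊, and for every ε with 0 < ε < γ there exists a constant A_ε > 0 such that |F(t)| ≤ A_ε · exp(−(γ − ε)/t) for all real t with 0 < t ≤ 1. Then |F(z)| ≤ B · exp(−Re(γ/z)) for all z ∈ ℂ₊. -/
open Complex

/-!
The substitution `w = 1 / z` preserves the right half-plane and turns decay at the origin along
the positive reals into decay at infinity. If `f` is bounded by `C` on the imaginary axis and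
`f x = O(exp (-c * x))` as `x → ∞`, then `exp (c * w) • f w` is still bounded by `C` on the
imaginary axis, is bounded on the positive reals and has growth of order less than two, so the
classical Phragmén–Lindelöf principle bounds it by `C` on the whole half-plane. A function known
only on the open half-plane is first shifted by `δ > 0`, and `δ → 0`. Finally `c = γ - ε → γ`.
-/

open Asymptotics Bornology Filter Set
open scoped Topology

variable {E : Type*} [NormedAddCommGroup E] [NormedSpace ℂ E] {f F : ℂ → E}

theorem isBigO_cexp_exp_re {α : Type*} (l : Filter α) (g : α → ℂ) :
    (fun x ↦ exp (g x)) =O[l] fun x ↦ Real.exp (g x).re :=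
  .of_norm_le fun x ↦ (norm_exp (g x)).le

theorem exists_isBigO_exp_rpow_cexp_smul {a : ℝ} (ha : 1 < a) {l : Filter ℂ}
    (hf : ∃ p < a, ∃ b, f =O[cobounded ℂ ⊓ l] fun z ↦ Real.exp (b * ‖z‖ ^ p)) (c : ℂ) :
    ∃ p < a, ∃ b, (fun z ↦ exp (c * z) • f z) =O[cobounded ℂ ⊓ l]
      fun z ↦ Real.exp (b * ‖z‖ ^ p) := by
  obtain ⟨p, hp, b, hO⟩ := hf
  refine ⟨max 1 p, max_lt ha hp, ‖c‖ + |b|, ?_⟩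
  have hexp : (fun z : ℂ ↦ Real.exp (c * z).re • Real.exp (b * ‖z‖ ^ p)) =O[cobounded ℂ ⊓ l]
      fun z ↦ Real.exp ((‖c‖ + |b|) * ‖z‖ ^ max 1 p) := by
    refine .of_norm_eventuallyLE ?_
    filter_upwards [(eventually_cobounded_le_norm 1).filter_mono inf_le_left] with z hz
    have hlin : (c * z).re ≤ ‖c‖ * ‖z‖ ^ max 1 p :=
      calc (c * z).re ≤ ‖c‖ * ‖z‖ ^ (1 : ℝ) := by simpa using re_le_norm (c * z)
        _ ≤ ‖c‖ * ‖z‖ ^ max 1 p := by gcongr; exact le_max_left _ _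
    have hpow : b * ‖z‖ ^ p ≤ |b| * ‖z‖ ^ max 1 p := by
      gcongr
      exacts [le_abs_self b, le_max_right _ _]
    simpa only [smul_eq_mul, ← Real.exp_add, Real.norm_eq_abs, Real.abs_exp, add_mul] using
      Real.exp_le_exp.2 (add_le_add hlin hpow)
  exact ((isBigO_cexp_exp_re _ _).smul hO).trans hexp

theorem norm_le_mul_exp_neg_mul_re_of_diffContOnCl {C c : ℝ} (hd : DiffContOnCl ℂ f {z | 0 < z.re})
    (hexp : ∃ p < (2 : ℝ), ∃ b, f =O[cobounded ℂ ⊓ 𝓟 {z | 0 < z.re}]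
      fun z ↦ Real.exp (b * ‖z‖ ^ p))
    (hre : (fun x : ℝ ↦ f x) =O[atTop] fun x ↦ Real.exp (-c * x))
    (him : ∀ y : ℝ, ‖f (y * I)‖ ≤ C) {z : ℂ} (hz : 0 ≤ z.re) :
    ‖f z‖ ≤ C * Real.exp (-(c * z.re)) := by
  have hnorm (w : ℂ) : ‖exp (c * w) • f w‖ = Real.exp (c * w.re) * ‖f w‖ := by
    rw [norm_smul, norm_exp, re_ofReal_mul]
  have hbounded : (fun x : ℝ ↦ exp (c * x) • f x) =O[atTop] fun _ ↦ (1 : ℝ) := by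
    simpa [← Real.exp_add] using (isBigO_cexp_exp_re atTop fun x : ℝ ↦ (c * x : ℂ)).smul hre
  have hproduct : ‖exp (c * z) • f z‖ ≤ C := by
    refine PhragmenLindelof.right_half_plane_of_bounded_on_real
      ((differentiable_id.const_mul _).cexp.diffContOnCl.smul hd)
      (exists_isBigO_exp_rpow_cexp_smul one_lt_two hexp c)
      ((isBigO_one_iff ℝ).1 hbounded) (fun y ↦ ?_) hz
    simpa [hnorm] using him y
  rwa [Real.exp_neg, ← div_eq_mul_inv, le_div_iff₀' (Real.exp_pos _), ← hnorm]

theorem norm_le_mul_exp_neg_mul_re {C c : ℝ} (hd : DifferentiableOn ℂ f {z | 0 < z.re})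
    (hbd : ∀ z : ℂ, 0 < z.re → ‖f z‖ ≤ C)
    (hre : (fun x : ℝ ↦ f x) =O[atTop] fun x ↦ Real.exp (-c * x)) {z : ℂ} (hz : 0 < z.re) :
    ‖f z‖ ≤ C * Real.exp (-(c * z.re)) := by
  have hshift : ∀ δ ∈ Ioo 0 z.re, ‖f z‖ ≤ C * Real.exp (-(c * (z.re - δ))) := by
    rintro δ ⟨hδ, hδz⟩
    have hpos {w : ℂ} (hw : 0 ≤ w.re) : 0 < (w + δ).re := by
      simpa using add_pos_of_nonneg_of_pos hw hδ
    have hdδ : DiffContOnCl ℂ (fun w ↦ f (w + δ)) {w | 0 < w.re} := by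
      refine DifferentiableOn.diffContOnCl (hd.comp (by fun_prop) fun w hw ↦ ?_)
      rw [closure_setOfPred_lt_re] at hw
      exact hpos hw
    have hexpδ : (fun w ↦ f (w + δ)) =O[cobounded ℂ ⊓ 𝓟 {w | 0 < w.re}]
        fun w ↦ Real.exp (0 * ‖w‖ ^ (0 : ℝ)) := by
      refine .of_bound C (eventually_inf_principal.2 <| .of_forall fun w hw ↦ ?_)
      simpa using hbd _ (hpos (le_of_lt hw))
    have hreδ : (fun x : ℝ ↦ f (x + δ)) =O[atTop] fun x ↦ Real.exp (-c * x) := by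
      have htranslate := hre.comp_tendsto (tendsto_atTop_add_const_right atTop δ tendsto_id)
      simp only [Function.comp_def, id, ofReal_add, mul_add, Real.exp_add,
        mul_comm _ (Real.exp (-c * δ))] at htranslate
      exact htranslate.trans (isBigO_const_mul_self _ _ _)
    have himδ (y : ℝ) : ‖f (y * I + δ)‖ ≤ C := hbd _ (hpos (by simp))
    simpa using norm_le_mul_exp_neg_mul_re_of_diffContOnCl hdδ ⟨0, two_pos, 0, hexpδ⟩ hreδ himδ
      (z := z - δ) (by simpa using hδz.le)
  have hlim : Tendsto (fun δ ↦ C * Real.exp (-(c * (z.re - δ)))) (𝓝[>] 0)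
      (𝓝 (C * Real.exp (-(c * z.re)))) :=
    (Continuous.tendsto' (by fun_prop) _ _ (by simp)).mono_left nhdsWithin_le_nhds
  exact ge_of_tendsto hlim (mem_of_superset (Ioo_mem_nhdsGT hz) hshift)

theorem inv_re_pos {z : ℂ} (hz : 0 < z.re) : 0 < z⁻¹.re := by
  have hz₀ : z ≠ 0 := fun h ↦ hz.ne' (by simp [h])
  simpa only [inv_re] using div_pos hz (normSq_pos.2 hz₀)

theorem norm_le_mul_exp_neg_div_re {B c : ℝ} (hF : DifferentiableOn ℂ F {z | 0 < z.re})
    (hbd : ∀ z : ℂ, 0 < z.re → ‖F z‖ ≤ B)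
    (hsmall : (fun t : ℝ ↦ F t) =O[𝓝[>] 0] fun t ↦ Real.exp (-c / t)) {z : ℂ} (hz : 0 < z.re) :
    ‖F z‖ ≤ B * Real.exp (-((c : ℂ) / z).re) := by
  have hdinv : DifferentiableOn ℂ (fun w ↦ F w⁻¹) {w | 0 < w.re} := by
    refine hF.comp (differentiableOn_inv.mono fun w hw hw₀ ↦ ?_) fun w hw ↦ inv_re_pos hw
    simp [hw₀] at hw
  have hreinv : (fun x : ℝ ↦ F (x : ℂ)⁻¹) =O[atTop] fun x ↦ Real.exp (-c * x) := by
    simpa [Function.comp_def] using hsmall.comp_tendsto tendsto_inv_atTop_nhdsGT_zero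
  simpa [div_eq_mul_inv] using
    norm_le_mul_exp_neg_mul_re hdinv (fun w hw ↦ hbd _ (inv_re_pos hw)) hreinv (inv_re_pos hz)

theorem phragmen_lindelof_halfplane_variant_general {B γ : ℝ} (hγ : 0 < γ)
    (hF : DifferentiableOn ℂ F {z | 0 < z.re}) (hbd : ∀ z : ℂ, 0 < z.re → ‖F z‖ ≤ B)
    (hsmall : ∀ ε : ℝ, 0 < ε → ε < γ → ∃ A : ℝ,
      ∀ t : ℝ, 0 < t → t ≤ 1 → ‖F t‖ ≤ A * Real.exp (-(γ - ε) / t)) {z : ℂ} (hz : 0 < z.re) :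
    ‖F z‖ ≤ B * Real.exp (-((γ : ℂ) / z).re) := by
  have hlim : Tendsto (fun ε : ℝ ↦ B * Real.exp (-(((γ - ε : ℝ) : ℂ) / z).re)) (𝓝[>] 0)
      (𝓝 (B * Real.exp (-((γ : ℂ) / z).re))) :=
    (Continuous.tendsto' (by fun_prop) _ _ (by simp)).mono_left nhdsWithin_le_nhds
  refine ge_of_tendsto hlim ?_
  filter_upwards [Ioo_mem_nhdsGT hγ] with ε ⟨hε, hεγ⟩
  obtain ⟨A, hA⟩ := hsmall ε hε hεγ
  refine norm_le_mul_exp_neg_div_re hF hbd (.of_bound A ?_) hz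
  filter_upwards [Ioc_mem_nhdsGT one_pos] with t ⟨ht, ht₁⟩
  simpa using hA t ht ht₁

theorem phragmen_lindelof_halfplane_variant
    (F : ℂ → ℂ) (B γ : ℝ) (hB : 0 < B) (hγ : 0 < γ)
    (hF : DifferentiableOn ℂ F {z : ℂ | 0 < z.re})
    (hbd : ∀ z : ℂ, 0 < z.re → ‖F z‖ ≤ B)
    (hsmall : ∀ ε : ℝ, 0 < ε → ε < γ → ∃ A : ℝ, 0 < A ∧
      ∀ t : ℝ, 0 < t → t ≤ 1 → ‖F t‖ ≤ A * Real.exp (-(γ - ε) / t)) :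
    ∀ z : ℂ, 0 < z.re → ‖F z‖ ≤ B * Real.exp (-((γ : ℂ) / z).re) := fun _ ↦
  phragmen_lindelof_halfplane_variant_general hγ hF hbd fun ε hε hεγ ↦
    (hsmall ε hε hεγ).imp fun _ ↦ And.right
end

section
/- Let (M, ρ) be a metric space and let 0 < β < 1. For any x, y, u ∈ M with ρ(x, u) ≤ ρ(y, u), one has ρ(x, u)^β + ρ(y, u)^β ≥ ρ(x, y)^β + (2 − 2^β) · ρ(x, u)^β. -/
/-!
Concavity of `f` on `[0, ∞)` makes the sum of `f` at two points grow as they are moved together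
with their sum fixed. For `a ≤ b` the pair `b, 2a` lies inside the pair `a, a + b`, hence
`f a + f (a + b) ≤ f b + f (2a)`. With `a = ρ(x, u)` and `b = ρ(y, u)`, the triangle inequality
bounds `f (ρ(x, y))` by `f (a + b)` for monotone `f`, and for `f t = t ^ β` one has
`f (2a) = 2 ^ β * a ^ β`.
-/

theorem smul_add_smul_add_swap_of_add_eq_one {R G : Type*} [Semiring R] [AddCommMonoid G]
    [Module R G] {a b : R} (hab : a + b = 1) (p q : G) :
    (a • p + b • q) + (b • p + a • q) = p + q := by
  rw [add_add_add_comm, ← add_smul, ← add_smul, add_comm b a, hab, one_smul, one_smul]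

theorem add_le_add_of_concaveOn_of_mem_segment {𝕜 E F : Type*} [Semiring 𝕜] [PartialOrder 𝕜]
    [AddCommGroup E] [Module 𝕜 E] [AddCommMonoid F] [PartialOrder F] [IsOrderedAddMonoid F]
    [Module 𝕜 F] {s : Set E} {f : E → F} (hf : ConcaveOn 𝕜 s f) {p q v w : E}
    (hp : p ∈ s) (hq : q ∈ s) (hv : v ∈ segment 𝕜 p q) (hvw : v + w = p + q) :
    f p + f q ≤ f v + f w := by
  obtain ⟨a, b, ha, hb, hab, rfl⟩ := hv
  obtain rfl : w = b • p + a • q :=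
    add_left_cancel (hvw.trans (smul_add_smul_add_swap_of_add_eq_one hab p q).symm)
  calc
    f p + f q = (a • f p + b • f q) + (b • f p + a • f q) :=
      (smul_add_smul_add_swap_of_add_eq_one hab (f p) (f q)).symm
    _ ≤ f (a • p + b • q) + f (b • p + a • q) :=
      add_le_add (hf.2 hp hq ha hb hab) (hf.2 hp hq hb ha (by rwa [add_comm]))

theorem map_dist_add_map_dist_le_of_concaveOn {M F : Type*} [PseudoMetricSpace M]
    [AddCommMonoid F] [PartialOrder F] [IsOrderedAddMonoid F] [Module ℝ F] {f : ℝ → F}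
    (hf : ConcaveOn ℝ (Set.Ici 0) f) (hmono : MonotoneOn f (Set.Ici 0))
    {x y u : M} (h : dist x u ≤ dist y u) :
    f (dist x y) + f (dist x u) ≤ f (2 * dist x u) + f (dist y u) := by
  have hsum : 0 ≤ dist x u + dist y u := by positivity
  have hmem : dist y u ∈ segment ℝ (dist x u) (dist x u + dist y u) := by
    rw [segment_eq_Icc (le_add_of_nonneg_right dist_nonneg)]
    exact ⟨h, le_add_of_nonneg_left dist_nonneg⟩
  calc
    f (dist x y) + f (dist x u) ≤ f (dist x u + dist y u) + f (dist x u) := by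
      gcongr
      exact hmono dist_nonneg hsum (dist_triangle_right x y u)
    _ = f (dist x u) + f (dist x u + dist y u) := add_comm _ _
    _ ≤ f (dist y u) + f (2 * dist x u) :=
      add_le_add_of_concaveOn_of_mem_segment hf dist_nonneg hsum hmem (by ring)
    _ = f (2 * dist x u) + f (dist y u) := add_comm _ _

theorem dist_rpow_inequality_general
    {M : Type*} [PseudoMetricSpace M] (β : ℝ) (hβ0 : 0 ≤ β) (hβ1 : β ≤ 1)
    (x y u : M) (h : dist x u ≤ dist y u) :
    dist x y ^ β + (2 - 2 ^ β) * dist x u ^ β ≤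
      dist x u ^ β + dist y u ^ β := by
  have hconcave : dist x y ^ β + dist x u ^ β ≤ (2 * dist x u) ^ β + dist y u ^ β :=
    map_dist_add_map_dist_le_of_concaveOn (Real.concaveOn_rpow hβ0 hβ1)
      (Real.monotoneOn_rpow_Ici_of_exponent_nonneg hβ0) h
  rw [Real.mul_rpow zero_le_two dist_nonneg] at hconcave
  linarith

theorem dist_rpow_inequality
    {M : Type*} [MetricSpace M] (β : ℝ) (hβ0 : 0 < β) (hβ1 : β < 1)
    (x y u : M) (h : dist x u ≤ dist y u) :
    dist x y ^ β + (2 - 2 ^ β) * dist x u ^ β ≤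
      dist x u ^ β + dist y u ^ β :=
  dist_rpow_inequality_general β hβ0.le hβ1.le x y u h
end

section
/- Let φ : ℝ^d → ℂ be a C^∞ function. Then φ belongs to the Schwartz class 𝒮(ℝ^d) if and only if for all integers m ≥ 0 and ℓ ≥ 0 one has sup_{x∈ℝ^d} (1 + |x|)^ℓ · |Δ^m φ(x)| < ∞, where Δ^m denotes the m-fold iterate of the Laplacian Δ. -/
open scoped Topology

/-- The Laplacian `Δφ(x) = ∑ i ∂²φ/∂x_i²(x)` on `ℝ^d`. -/
noncomputable def lap (d : ℕ) (φ : EuclideanSpace ℝ (Fin d) → ℂ) :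
    EuclideanSpace ℝ (Fin d) → ℂ :=
  fun x => ∑ i : Fin d,
    iteratedFDeriv ℝ 2 φ x (fun _ => EuclideanSpace.single i (1 : ℝ))

open Filter Laplacian Metric Module Set
open scoped ContDiff RealInnerProductSpace SchwartzMap

/-!
A `C²` function satisfies the interior gradient estimate
`‖Df(x)‖ ≤ (d / r) sup ‖f‖ + (r / 2) sup ‖Δf‖`, with suprema over the closed ball of radius `r`
around `x`. For real-valued `f` and a unit vector `v`, compare the part of `f` that is odd under
reflection in the hyperplane through `x` orthogonal to `v` with a quadratic barrier on the half ball
`⟪v, · - x⟫ ≥ 0`: both vanish at `x`, and the minimum principle keeps the barrier above the odd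
part, so its slope bounds `Df(x) v`. The case of vector-valued `f` follows by duality. On unit balls
the estimate transfers rapid decay of `f` and `Δf` to `Df`, and since `Δ` commutes with `D`, rapid
decay of all `Δ^m φ` propagates to all derivatives of `φ`.
-/

section SecondDerivativeTest

theorem deriv_deriv_nonneg_of_isLocalMin {g : ℝ → ℝ} {t : ℝ} (hmin : IsLocalMin g t)
    (hg : ContinuousAt g t) : 0 ≤ deriv (deriv g) t := by
  by_contra! hneg
  have hmax : IsLocalMax g t := isLocalMax_of_deriv_deriv_neg hneg hmin.deriv_eq_zero hg
  have hconst : g =ᶠ[𝓝 t] fun _ => g t := by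
    filter_upwards [hmin, hmax] with s h₁ h₂ using le_antisymm h₂ h₁
  have hzero : deriv (deriv g) t = 0 := by rw [hconst.deriv.deriv_eq]; simp
  exact hneg.ne hzero

theorem fderiv_fderiv_apply_nonneg_of_isLocalMin {E : Type*} [NormedAddCommGroup E]
    [NormedSpace ℝ E] {f : E → ℝ} {x : E} (hmin : IsLocalMin f x) (hf : ContDiffAt ℝ 2 f x)
    (v : E) : 0 ≤ fderiv ℝ (fderiv ℝ f) x v v := by
  let γ : ℝ → E := fun t => x + t • v
  have hγ (t : ℝ) : HasDerivAt γ v t := by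
    simpa [γ] using ((hasDerivAt_id t).smul_const v).const_add x
  have hγ₀ : γ 0 = x := by simp [γ]
  have hlim : Tendsto γ (𝓝 0) (𝓝 x) := hγ₀ ▸ (hγ 0).continuousAt
  have hdiff : ∀ᶠ y in 𝓝 x, DifferentiableAt ℝ f y :=
    (hf.eventually (by simp)).mono fun y hy => hy.differentiableAt two_ne_zero
  have hderiv : deriv (f ∘ γ) =ᶠ[𝓝 0] fun t => fderiv ℝ f (γ t) v := by
    filter_upwards [hlim.eventually hdiff] with t ht
    exact (ht.hasFDerivAt.comp_hasDerivAt t (hγ t)).deriv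
  have hderiv₂ : deriv (deriv (f ∘ γ)) 0 = fderiv ℝ (fderiv ℝ f) x v v := by
    have hf' : DifferentiableAt ℝ (fderiv ℝ f) (γ 0) := by
      rw [hγ₀]
      exact (hf.fderiv_right (m := 1) (by norm_num)).differentiableAt one_ne_zero
    have h : HasDerivAt (fun t => fderiv ℝ f (γ t) v) _ 0 :=
      (hf'.hasFDerivAt.comp_hasDerivAt 0 (hγ 0)).clm_apply (hasDerivAt_const 0 v)
    rw [hderiv.deriv_eq, h.deriv]
    simp [hγ₀]
  rw [← hderiv₂]
  refine deriv_deriv_nonneg_of_isLocalMin ?_ (.comp (hγ₀.symm ▸ hf.continuousAt)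
    (hγ 0).continuousAt)
  simpa [IsLocalMin, IsMinFilter, hγ₀] using hlim.eventually hmin

end SecondDerivativeTest

section Laplacian

variable {E F : Type*} [NormedAddCommGroup E] [InnerProductSpace ℝ E] [FiniteDimensional ℝ E]
  [NormedAddCommGroup F] [NormedSpace ℝ F]

theorem laplacian_eq_sum_fderiv_fderiv {ι : Type*} [Fintype ι] (b : OrthonormalBasis ι ℝ E)
    (f : E → F) (x : E) : Δ f x = ∑ i, fderiv ℝ (fderiv ℝ f) x (b i) (b i) := by
  simp [InnerProductSpace.laplacian_eq_iteratedFDeriv_orthonormalBasis f b,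
    iteratedFDeriv_two_apply]

theorem laplacian_nonneg_of_isLocalMin {f : E → ℝ} {x : E} (hmin : IsLocalMin f x)
    (hf : ContDiffAt ℝ 2 f x) : 0 ≤ Δ f x := by
  rw [laplacian_eq_sum_fderiv_fderiv (stdOrthonormalBasis ℝ E)]
  exact Finset.sum_nonneg fun i _ => fderiv_fderiv_apply_nonneg_of_isLocalMin hmin hf _

theorem nonneg_of_laplacian_neg_of_nonneg_frontier {K : Set E} (hK : IsCompact K) {w : E → ℝ}
    (hcont : ContinuousOn w K) (hw : ∀ x ∈ interior K, ContDiffAt ℝ 2 w x)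
    (hΔ : ∀ x ∈ interior K, Δ w x < 0) (hfrontier : ∀ x ∈ frontier K, 0 ≤ w x) {x : E}
    (hx : x ∈ K) : 0 ≤ w x := by
  obtain ⟨p, hpK, hmin⟩ := hK.exists_isMinOn ⟨x, hx⟩ hcont
  refine le_trans ?_ (hmin hx)
  by_cases hp : p ∈ interior K
  · have hloc : IsLocalMin w p := hmin.isLocalMin (mem_interior_iff_mem_nhds.1 hp)
    exact absurd (laplacian_nonneg_of_isLocalMin hloc (hw p hp)) (hΔ p hp).not_ge
  · exact hfrontier p ⟨subset_closure hpK, hp⟩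

theorem laplacian_comp_linearIsometryEquiv {E' : Type*} [NormedAddCommGroup E']
    [InnerProductSpace ℝ E'] [FiniteDimensional ℝ E'] {f : E' → F} (hf : ContDiff ℝ 2 f)
    (R : E ≃ₗᵢ[ℝ] E') (x : E) : Δ (f ∘ R) x = Δ f (R x) := by
  have h := (R.toContinuousLinearEquiv : E →L[ℝ] E').iteratedFDeriv_comp_right hf x le_rfl
  let b := stdOrthonormalBasis ℝ E
  rw [InnerProductSpace.laplacian_eq_iteratedFDeriv_orthonormalBasis (f ∘ R) b,
    InnerProductSpace.laplacian_eq_iteratedFDeriv_orthonormalBasis f (b.map R)]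
  refine Finset.sum_congr rfl fun i _ => (congr($h _)).trans ?_
  rw [ContinuousMultilinearMap.compContinuousLinearMap_apply]
  congr 1
  ext j
  fin_cases j <;> simp

theorem laplacian_comp_add_left (f : E → F) (a x : E) :
    Δ (fun y => f (a + y)) x = Δ f (a + x) := by
  simp [InnerProductSpace.laplacian_eq_iteratedFDeriv_stdOrthonormalBasis,
    iteratedFDeriv_comp_add_left]

theorem laplacian_bilinear_diagonal {ι : Type*} [Fintype ι] (b : OrthonormalBasis ι ℝ E)
    (B : E →L[ℝ] E →L[ℝ] F) (x : E) : Δ (fun y => B y y) x = 2 • ∑ i, B (b i) (b i) := by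
  have h : fderiv ℝ (fun y => B y y) = ⇑(B + B.flip) := by
    ext y v
    rw [B.fderiv_of_bilinear differentiableAt_fun_id differentiableAt_fun_id]
    simp
  rw [laplacian_eq_sum_fderiv_fderiv b, h, (B + B.flip).fderiv]
  simp [two_smul, Finset.sum_add_distrib]

theorem laplacian_clm (L : E →L[ℝ] F) (x : E) : Δ (L : E → F) x = 0 := by
  have h : fderiv ℝ L = fun _ => L := funext fun _ => L.fderiv
  simp [laplacian_eq_sum_fderiv_fderiv (stdOrthonormalBasis ℝ E), h]

theorem contDiff_laplacian {f : E → F} {n : ℕ∞ω} (hf : ContDiff ℝ (n + 2) f) :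
    ContDiff ℝ n (Δ f) := by
  have h₁ : ContDiff ℝ (n + 1) (fderiv ℝ f) := hf.fderiv_right (by rw [add_assoc]; norm_num)
  have h₂ : ContDiff ℝ n (fderiv ℝ (fderiv ℝ f)) := h₁.fderiv_right le_rfl
  rw [funext (laplacian_eq_sum_fderiv_fderiv (stdOrthonormalBasis ℝ E) f)]
  exact ContDiff.sum fun i _ => (h₂.clm_apply contDiff_const).clm_apply contDiff_const

theorem fderiv_laplacian {f : E → F} (hf : ContDiff ℝ 3 f) : fderiv ℝ (Δ f) = Δ (fderiv ℝ f) := by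
  have hf₁ : ContDiff ℝ 2 (fderiv ℝ f) := hf.fderiv_right (by norm_num)
  have hf₂ : Differentiable ℝ (fderiv ℝ (fderiv ℝ f)) :=
    (hf₁.fderiv_right (m := 1) (by norm_num)).differentiable one_ne_zero
  have happly (x v w : E) : fderiv ℝ (fun y => fderiv ℝ (fderiv ℝ f) y v w) x =
      ((fderiv ℝ (fderiv ℝ (fderiv ℝ f)) x).flip v).flip w := by
    ext u
    rw [((hf₂ x).hasFDerivAt.clm_apply (hasFDerivAt_const v x) |>.clm_apply
      (hasFDerivAt_const w x)).fderiv]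
    simp
  have hsymm_last (x u v w : E) : fderiv ℝ (fderiv ℝ (fderiv ℝ f)) x u v w =
      fderiv ℝ (fderiv ℝ (fderiv ℝ f)) x u w v := by
    have h : (fun y => fderiv ℝ (fderiv ℝ f) y v w) = fun y => fderiv ℝ (fderiv ℝ f) y w v :=
      funext fun y => hf.contDiffAt.isSymmSndFDerivAt (by norm_num) v w
    simpa [happly] using congr(fderiv ℝ $h x u)
  have hsymm_first (x u v w : E) : fderiv ℝ (fderiv ℝ (fderiv ℝ f)) x u v w =
      fderiv ℝ (fderiv ℝ (fderiv ℝ f)) x v u w :=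
    congr($(hf₁.contDiffAt.isSymmSndFDerivAt (by simp) u v) w)
  let b := stdOrthonormalBasis ℝ E
  ext x w
  rw [funext (laplacian_eq_sum_fderiv_fderiv b f), fderiv_fun_sum fun i _ => by fun_prop,
    laplacian_eq_sum_fderiv_fderiv b]
  simp only [sum_apply, happly, ContinuousLinearMap.flip_apply]
  exact Finset.sum_congr rfl fun i _ => (hsymm_first ..).trans (hsymm_last ..)

theorem laplacian_iteratedFDeriv {f : E → F} (hf : ContDiff ℝ ∞ f) (n : ℕ) :
    Δ (iteratedFDeriv ℝ n f) = iteratedFDeriv ℝ n (Δ f) := by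
  induction n with
  | zero =>
    rw [iteratedFDeriv_zero_eq_comp, iteratedFDeriv_zero_eq_comp]
    exact InnerProductSpace.laplacian_CLE_comp_left
      (l := (continuousMultilinearCurryFin0 ℝ E F).symm.toContinuousLinearEquiv)
  | succ n ih =>
    have hsmooth (k : ℕ) : ContDiff ℝ 3 (iteratedFDeriv ℝ k f) :=
      (contDiff_infty.1 hf (3 + k)).iteratedFDeriv_right (by norm_cast)
    have hle : (2 : ℕ∞ω) ≤ 3 := by norm_num
    ext x v
    let evalLeft : (E →L[ℝ] E [×n]→L[ℝ] F) →L[ℝ] F :=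
      (ContinuousMultilinearMap.apply ℝ (fun _ => E) F (Fin.tail v)).comp (.apply ℝ _ (v 0))
    calc
      Δ (iteratedFDeriv ℝ (n + 1) f) x v = Δ (evalLeft ∘ fderiv ℝ (iteratedFDeriv ℝ n f)) x :=
        (((hsmooth (n + 1)).of_le hle).contDiffAt.laplacian_CLM_comp_left
          (l := ContinuousMultilinearMap.apply ℝ (fun _ => E) F v)).symm
      _ = evalLeft (Δ (fderiv ℝ (iteratedFDeriv ℝ n f)) x) :=
        ((hsmooth n).fderiv_right (by norm_num)).contDiffAt.laplacian_CLM_comp_left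
      _ = evalLeft (fderiv ℝ (iteratedFDeriv ℝ n (Δ f)) x) := by
        rw [← ih, fderiv_laplacian (hsmooth n)]

theorem contDiff_iterate_laplacian {f : E → F} (hf : ContDiff ℝ ∞ f) (m : ℕ) :
    ContDiff ℝ ∞ (Δ^[m] f) := by
  induction m with
  | zero => exact hf
  | succ m ih => rw [Function.iterate_succ_apply']; exact contDiff_laplacian ih

end Laplacian

section GradientEstimate

variable {E F : Type*} [NormedAddCommGroup E] [InnerProductSpace ℝ E]
  [NormedAddCommGroup F] [NormedSpace ℝ F]

/-- The closed half ball of radius `r` around the origin with inner normal `v`, the domain on which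
the odd part of a function is compared with a barrier. -/
def halfBall (v : E) (r : ℝ) : Set E := closedBall 0 r ∩ {z | 0 ≤ ⟪v, z⟫}

/-- The quadratic barrier `A ‖z‖² + L ⟪v, z⟫ (r - ⟪v, z⟫)` on the half ball of radius `r` with inner
normal `v`. The first term dominates boundary values on the sphere; the second one, whose Laplacian
is `-2L` for a unit vector `v`, makes the sum superharmonic for large `L`. -/
noncomputable def halfBallBarrier (v : E) (r A L : ℝ) (z : E) : ℝ :=
  A * ‖z‖ ^ 2 + L * (⟪v, z⟫ * (r - ⟪v, z⟫))

theorem convex_halfBall (v : E) (r : ℝ) : Convex ℝ (halfBall v r) :=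
  (convex_closedBall 0 r).inter (convex_halfSpace_ge (innerSL ℝ v).isLinear 0)

theorem isCompact_halfBall [FiniteDimensional ℝ E] (v : E) (r : ℝ) : IsCompact (halfBall v r) :=
  (isCompact_closedBall 0 r).inter_right (isClosed_le continuous_const (by fun_prop))

theorem norm_eq_or_inner_eq_zero_of_mem_frontier_halfBall {v z : E} {r : ℝ} (hr : 0 < r)
    (hz : z ∈ frontier (halfBall v r)) : ‖z‖ = r ∨ ⟪v, z⟫ = 0 := by
  rcases frontier_inter_subset _ _ hz with ⟨hball, -⟩ | ⟨-, hspace⟩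
  · exact .inl (by simpa [frontier_closedBall _ hr.ne'] using hball)
  · exact .inr (frontier_le_subset_eq continuous_const (by fun_prop) hspace).symm

theorem contDiff_halfBallBarrier (v : E) (r A L : ℝ) {n : ℕ∞ω} :
    ContDiff ℝ n (halfBallBarrier v r A L) := by
  have hinner : ContDiff ℝ n fun z : E => ⟪v, z⟫ := (innerSL ℝ v).contDiff
  exact (contDiff_const.mul (contDiff_norm_sq ℝ)).add
    (contDiff_const.mul (hinner.mul (contDiff_const.sub hinner)))

theorem fderiv_halfBallBarrier_zero {v : E} (hv : ‖v‖ = 1) (r A L : ℝ) :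
    fderiv ℝ (halfBallBarrier v r A L) 0 v = L * r := by
  have hsq : HasFDerivAt (fun z : E => ‖z‖ ^ 2) _ 0 := (hasStrictFDerivAt_norm_sq 0).hasFDerivAt
  have hinner : HasFDerivAt (fun z => ⟪v, z⟫) (innerSL ℝ v) 0 := (innerSL ℝ v).hasFDerivAt
  have h := (hsq.const_mul A).add ((hinner.mul (hinner.const_sub r)).const_mul L)
  have hbarrier : HasFDerivAt (halfBallBarrier v r A L) _ 0 := h
  rw [hbarrier.fderiv]
  simp [hv]

theorem laplacian_halfBallBarrier [FiniteDimensional ℝ E] {v : E} (hv : ‖v‖ = 1) (r A L : ℝ)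
    (z : E) : Δ (halfBallBarrier v r A L) z = 2 * (finrank ℝ E * A - L) := by
  let I : E →L[ℝ] E →L[ℝ] ℝ := innerSL ℝ
  let B : E →L[ℝ] E →L[ℝ] ℝ := A • I - L • (innerSL ℝ v).smulRight (innerSL ℝ v)
  let ℓ : E →L[ℝ] ℝ := (L * r) • innerSL ℝ v
  let b := stdOrthonormalBasis ℝ E
  have hB : ContDiff ℝ 2 fun y => B y y := B.contDiff.clm_apply contDiff_id
  have hB_apply (y : E) : B y y = A * ‖y‖ ^ 2 - L * ⟪v, y⟫ ^ 2 := by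
    simp [B, I, innerSL_apply_apply ℝ, ← sq]
  have hsplit : halfBallBarrier v r A L = (fun y => B y y) + ℓ := by
    ext y
    have hℓ : ℓ y = L * r * ⟪v, y⟫ := rfl
    rw [halfBallBarrier, Pi.add_apply, hB_apply, hℓ]
    ring
  have htrace : ∑ i, B (b i) (b i) = finrank ℝ E * A - L := by
    simp [hB_apply, Finset.sum_sub_distrib, ← Finset.mul_sum, b.sum_sq_inner_left, hv]
  rw [hsplit, hB.contDiffAt.laplacian_add ℓ.contDiff.contDiffAt, laplacian_bilinear_diagonal b,
    laplacian_clm, htrace]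
  simp

theorem le_halfBallBarrier [FiniteDimensional ℝ E] {v : E} (hv : ‖v‖ = 1) {r A L : ℝ} (hr : 0 < r)
    (hA : 0 ≤ A) (hL : 0 ≤ L) {h : E → ℝ} (hh : ContDiff ℝ 2 h)
    (hplane : ∀ z, ⟪v, z⟫ = 0 → h z ≤ 0) (hsphere : ∀ z ∈ sphere 0 r, h z ≤ A * r ^ 2)
    (hΔ : ∀ z ∈ halfBall v r, 2 * (finrank ℝ E * A - L) < Δ h z) {z : E}
    (hz : z ∈ halfBall v r) : h z ≤ halfBallBarrier v r A L z := by
  have hbarrier : ContDiff ℝ 2 (halfBallBarrier v r A L) := contDiff_halfBallBarrier v r A L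
  suffices 0 ≤ (halfBallBarrier v r A L - h) z from sub_nonneg.1 this
  refine nonneg_of_laplacian_neg_of_nonneg_frontier (w := _ - h) (isCompact_halfBall v r)
    (hbarrier.sub hh).continuous.continuousOn (fun _ _ => (hbarrier.sub hh).contDiffAt)
    (fun x hx => ?_) (fun x hx => sub_nonneg.2 ?_) hz
  · rw [hbarrier.contDiffAt.laplacian_sub hh.contDiffAt, laplacian_halfBallBarrier hv]
    exact sub_neg.2 (hΔ x (interior_subset hx))
  · have hx' : x ∈ halfBall v r := (isCompact_halfBall v r).isClosed.frontier_subset hx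
    rcases norm_eq_or_inner_eq_zero_of_mem_frontier_halfBall hr hx with hxr | hx₀
    · have hle : ⟪v, x⟫ ≤ r := by simpa [hv, hxr] using real_inner_le_norm v x
      have hconcave : 0 ≤ L * (⟪v, x⟫ * (r - ⟪v, x⟫)) :=
        mul_nonneg hL (mul_nonneg hx'.2 (sub_nonneg.2 hle))
      calc
        h x ≤ A * r ^ 2 := hsphere x (by simpa using hxr)
        _ ≤ halfBallBarrier v r A L x := by simpa [halfBallBarrier, hxr] using hconcave
    · calc
        h x ≤ 0 := hplane x hx₀
        _ ≤ halfBallBarrier v r A L x := by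
          simpa [halfBallBarrier, hx₀] using mul_nonneg hA (sq_nonneg ‖x‖)

theorem fderiv_zero_le_of_le_halfBallBarrier {v : E} (hv : ‖v‖ = 1) {r A L : ℝ} (hr : 0 < r)
    {h : E → ℝ} (hh : DifferentiableAt ℝ h 0) (h₀ : h 0 = 0)
    (hle : ∀ z ∈ halfBall v r, h z ≤ halfBallBarrier v r A L z) : fderiv ℝ h 0 v ≤ L * r := by
  have hbarrier : DifferentiableAt ℝ (halfBallBarrier v r A L) 0 :=
    (contDiff_halfBallBarrier v r A L (n := 1)).differentiable one_ne_zero 0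
  have hmin : IsMinOn (halfBallBarrier v r A L - h) (halfBall v r) 0 := fun z hz => by
    simpa [halfBallBarrier, h₀] using hle z hz
  have hcone : r • v ∈ posTangentConeAt (halfBall v r) 0 := by
    refine mem_posTangentConeAt_of_segment_subset ((convex_halfBall v r).segment_subset ?_ ?_) <;>
      simp [halfBall, norm_smul, inner_smul_right, hv, hr.le, abs_of_nonneg]
  have hderiv : 0 ≤ (fderiv ℝ (halfBallBarrier v r A L) 0 - fderiv ℝ h 0) (r • v) :=
    hmin.localize.hasFDerivWithinAt_nonneg
      (hbarrier.hasFDerivAt.sub hh.hasFDerivAt).hasFDerivWithinAt hcone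
  rw [map_smul, smul_eq_mul, sub_apply, fderiv_halfBallBarrier_zero hv] at hderiv
  exact sub_nonneg.1 ((mul_nonneg_iff_of_pos_left hr).1 hderiv)

/-- Half the difference between `u` and its reflection in the hyperplane `vᗮ`: it vanishes on that
hyperplane and keeps the derivative of `u` at the origin in the direction `v`. -/
noncomputable def oddPart (v : E) (f : E → F) : E → F :=
  (1 / 2 : ℝ) • (f - f ∘ (ℝ ∙ v)ᗮ.reflection)

theorem contDiff_oddPart {n : ℕ∞ω} {f : E → F} (hf : ContDiff ℝ n f) (v : E) :
    ContDiff ℝ n (oddPart v f) :=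
  contDiff_const.smul (hf.sub (hf.comp (ℝ ∙ v)ᗮ.reflection.contDiff))

theorem oddPart_eq_zero_of_inner_eq_zero (f : E → F) {v z : E} (hz : ⟪v, z⟫ = 0) :
    oddPart v f z = 0 := by
  have hfixed : (ℝ ∙ v)ᗮ.reflection z = z := Submodule.reflection_mem_subspace_eq_self
    (Submodule.mem_orthogonal_singleton_iff_inner_right.2 hz)
  simp [oddPart, hfixed]

theorem norm_oddPart_le {f : E → F} {r M : ℝ} (hf : ∀ z ∈ closedBall 0 r, ‖f z‖ ≤ M) (v : E) {z : E}
    (hz : z ∈ closedBall 0 r) : ‖oddPart v f z‖ ≤ M := by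
  let w := (ℝ ∙ v)ᗮ.reflection z
  have hw : w ∈ closedBall 0 r := by simpa [w] using hz
  calc
    ‖oddPart v f z‖ = 1 / 2 * ‖f z - f w‖ := by simp [oddPart, norm_smul, w]
    _ ≤ 1 / 2 * (M + M) := by
      gcongr
      exact (norm_sub_le _ _).trans (add_le_add (hf z hz) (hf w hw))
    _ = M := by ring

theorem laplacian_oddPart [FiniteDimensional ℝ E] {f : E → F} (hf : ContDiff ℝ 2 f) (v : E) :
    Δ (oddPart v f) = oddPart v (Δ f) := by
  have hcomp : ContDiff ℝ 2 (f ∘ (ℝ ∙ v)ᗮ.reflection) := hf.comp (ℝ ∙ v)ᗮ.reflection.contDiff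
  have hsub : ContDiff ℝ 2 (f - f ∘ (ℝ ∙ v)ᗮ.reflection) := hf.sub hcomp
  ext z
  simp [oddPart, InnerProductSpace.laplacian_smul _ hsub.contDiffAt,
    hf.contDiffAt.laplacian_sub hcomp.contDiffAt, laplacian_comp_linearIsometryEquiv hf]

theorem fderiv_oddPart_zero {f : E → F} (hf : DifferentiableAt ℝ f 0) (v : E) :
    fderiv ℝ (oddPart v f) 0 v = fderiv ℝ f 0 v := by
  let R : E ≃ₗᵢ[ℝ] E := (ℝ ∙ v)ᗮ.reflection
  have hRv : R v = -v := Submodule.reflection_orthogonalComplement_singleton_eq_neg v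
  have hfR : HasFDerivAt (f ∘ R) ((fderiv ℝ f 0).comp (R : E →L[ℝ] E)) 0 := by
    refine HasFDerivAt.comp 0 ?_ R.toContinuousLinearEquiv.hasFDerivAt
    simpa using hf.hasFDerivAt
  have hodd : HasFDerivAt (oddPart v f) _ 0 := (hf.hasFDerivAt.sub hfR).const_smul (1 / 2 : ℝ)
  calc
    fderiv ℝ (oddPart v f) 0 v = (1 / 2 : ℝ) • (fderiv ℝ f 0 v - fderiv ℝ f 0 (R v)) := by
      rw [hodd.fderiv]; rfl
    _ = fderiv ℝ f 0 v := by rw [hRv, map_neg]; module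

theorem fderiv_zero_apply_le_of_norm_laplacian_le [FiniteDimensional ℝ E] {u : E → ℝ}
    (hu : ContDiff ℝ 2 u) {r M N : ℝ} (hr : 0 < r) (hM : ∀ z ∈ closedBall 0 r, ‖u z‖ ≤ M)
    (hN : ∀ z ∈ closedBall 0 r, ‖Δ u z‖ ≤ N) {v : E} (hv : ‖v‖ = 1) :
    fderiv ℝ u 0 v ≤ finrank ℝ E * M / r + r * N / 2 := by
  have h₀ : (0 : E) ∈ closedBall 0 r := mem_closedBall_self hr.le
  have hM₀ : 0 ≤ M := (norm_nonneg _).trans (hM 0 h₀)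
  have hN₀ : 0 ≤ N := (norm_nonneg _).trans (hN 0 h₀)
  have hodd : ContDiff ℝ 2 (oddPart v u) := contDiff_oddPart hu v
  have hslope (L : ℝ) (hL : finrank ℝ E * (M / r ^ 2) + N / 2 < L) :
      fderiv ℝ (oddPart v u) 0 v ≤ L * r := by
    have hbarrier (z : E) (hz : z ∈ halfBall v r) :
        oddPart v u z ≤ halfBallBarrier v r (M / r ^ 2) L z := by
      refine le_halfBallBarrier hv hr (by positivity) (le_trans (by positivity) hL.le) hodd
        (fun y hy => (oddPart_eq_zero_of_inner_eq_zero u hy).le) (fun y hy => ?_) (fun y hy => ?_)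
        hz
      · rw [div_mul_cancel₀ M (by positivity)]
        exact (Real.le_norm_self _).trans (norm_oddPart_le hM v (sphere_subset_closedBall hy))
      · rw [laplacian_oddPart hu]
        have hlower : -N ≤ oddPart v (Δ u) y :=
          neg_le_of_abs_le (norm_oddPart_le (f := Δ u) hN v hy.1)
        linarith
    exact fderiv_zero_le_of_le_halfBallBarrier hv hr (hodd.differentiable two_ne_zero 0)
      (oddPart_eq_zero_of_inner_eq_zero u (inner_zero_right v)) hbarrier
  calc
    fderiv ℝ u 0 v = fderiv ℝ (oddPart v u) 0 v :=
      (fderiv_oddPart_zero (hu.differentiable two_ne_zero 0) v).symm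
    _ ≤ (finrank ℝ E * (M / r ^ 2) + N / 2) * r :=
      (div_le_iff₀ hr).1 <| le_of_forall_gt_imp_ge_of_dense fun L hL =>
        (div_le_iff₀ hr).2 (hslope L hL)
    _ = finrank ℝ E * M / r + r * N / 2 := by field_simp

theorem norm_fderiv_le_of_norm_laplacian_le [FiniteDimensional ℝ E] {f : E → F}
    (hf : ContDiff ℝ 2 f) {x : E} {r M N : ℝ} (hr : 0 < r)
    (hM : ∀ y ∈ closedBall x r, ‖f y‖ ≤ M) (hN : ∀ y ∈ closedBall x r, ‖Δ f y‖ ≤ N) :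
    ‖fderiv ℝ f x‖ ≤ finrank ℝ E * M / r + r * N / 2 := by
  have hx : x ∈ closedBall x r := mem_closedBall_self hr.le
  have hM₀ : 0 ≤ M := (norm_nonneg _).trans (hM x hx)
  have hN₀ : 0 ≤ N := (norm_nonneg _).trans (hN x hx)
  refine ContinuousLinearMap.opNorm_le_of_unit_norm (by positivity) fun v hv => ?_
  obtain ⟨T, hT, hTv⟩ := exists_dual_vector'' ℝ (fderiv ℝ f x v)
  let u : E → ℝ := fun z => T (f (x + z))
  have hu : ContDiff ℝ 2 u := by fun_prop
  have hfderiv : fderiv ℝ u 0 v = ‖fderiv ℝ f x v‖ := by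
    have hg : HasFDerivAt (fun z => f (x + z)) (fderiv ℝ f x) 0 := by
      simpa [hasFDerivAt_comp_add_left] using (hf.differentiable two_ne_zero x).hasFDerivAt
    have hu' : HasFDerivAt u (T.comp (fderiv ℝ f x)) 0 := T.hasFDerivAt.comp 0 hg
    simpa [hu'.fderiv] using hTv
  have hlaplacian (z : E) : Δ u z = T (Δ f (x + z)) := by
    have hg : ContDiff ℝ 2 fun z => f (x + z) := by fun_prop
    rw [← laplacian_comp_add_left f x]
    exact hg.contDiffAt.laplacian_CLM_comp_left
  have hT_le (w : F) : ‖T w‖ ≤ ‖w‖ := by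
    simpa using T.le_of_opNorm_le hT w
  rw [← hfderiv]
  refine fderiv_zero_apply_le_of_norm_laplacian_le hu hr (fun z hz => ?_) (fun z hz => ?_) hv
  · exact (hT_le _).trans (hM (x + z) (by simpa using hz))
  · exact hlaplacian z ▸ (hT_le _).trans (hN (x + z) (by simpa using hz))

end GradientEstimate

section Decay

variable {E F : Type*} [NormedAddCommGroup E] [NormedAddCommGroup F]

/-- Decay of `f` at infinity faster than every power of `1 + ‖x‖`, without any condition on the
derivatives of `f`. -/
def RapidlyDecreasing (f : E → F) : Prop :=
  ∀ ℓ : ℕ, ∃ C : ℝ, ∀ x, (1 + ‖x‖) ^ ℓ * ‖f x‖ ≤ C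

theorem one_add_norm_le_two_mul_of_mem_closedBall {x y : E} (hy : y ∈ closedBall x 1) :
    1 + ‖x‖ ≤ 2 * (1 + ‖y‖) := by
  have hxy : ‖x‖ ≤ ‖y‖ + 1 := norm_le_norm_add_const_of_dist_le (mem_closedBall'.1 hy)
  linarith [norm_nonneg y]

theorem norm_le_two_pow_mul_div_of_mem_closedBall {f : E → F} {ℓ : ℕ} {C : ℝ}
    (hC : ∀ x, (1 + ‖x‖) ^ ℓ * ‖f x‖ ≤ C) {x y : E} (hy : y ∈ closedBall x 1) :
    ‖f y‖ ≤ 2 ^ ℓ * C / (1 + ‖x‖) ^ ℓ := by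
  rw [le_div_iff₀' (by positivity)]
  calc
    (1 + ‖x‖) ^ ℓ * ‖f y‖ ≤ (2 * (1 + ‖y‖)) ^ ℓ * ‖f y‖ := by
      gcongr
      exact one_add_norm_le_two_mul_of_mem_closedBall hy
    _ = 2 ^ ℓ * ((1 + ‖y‖) ^ ℓ * ‖f y‖) := by rw [mul_pow, mul_assoc]
    _ ≤ 2 ^ ℓ * C := by gcongr; exact hC y

theorem rapidlyDecreasing_schwartzMap [NormedSpace ℝ E] [NormedSpace ℝ F] (ψ : 𝓢(E, F)) :
    RapidlyDecreasing ψ := fun ℓ => by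
  have h := SchwartzMap.one_add_le_sup_seminorm_apply (𝕜 := ℝ) (m := (ℓ, 0)) le_rfl le_rfl ψ
  exact ⟨_, fun x => by simpa using h x⟩

variable [InnerProductSpace ℝ E] [FiniteDimensional ℝ E] [NormedSpace ℝ F]

theorem RapidlyDecreasing.fderiv {f : E → F} (hf : ContDiff ℝ 2 f) (h : RapidlyDecreasing f)
    (hΔ : RapidlyDecreasing (Δ f)) : RapidlyDecreasing (fderiv ℝ f) := by
  intro ℓ
  obtain ⟨C, hC⟩ := h ℓ
  obtain ⟨D, hD⟩ := hΔ ℓ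
  refine ⟨2 ^ ℓ * (finrank ℝ E * C + D / 2), fun x => ?_⟩
  have hgrad := norm_fderiv_le_of_norm_laplacian_le hf one_pos
    (fun _ => norm_le_two_pow_mul_div_of_mem_closedBall hC (x := x))
    fun _ => norm_le_two_pow_mul_div_of_mem_closedBall hD
  rw [← le_div_iff₀' (by positivity)]
  exact hgrad.trans_eq (by ring)

theorem rapidlyDecreasing_iteratedFDeriv_iterate_laplacian {f : E → F} (hf : ContDiff ℝ ∞ f)
    (h : ∀ m, RapidlyDecreasing (Δ^[m] f)) (n m : ℕ) :
    RapidlyDecreasing (iteratedFDeriv ℝ n (Δ^[m] f)) := by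
  induction n generalizing m with
  | zero => simpa [RapidlyDecreasing] using h m
  | succ n ih =>
    have hm : ContDiff ℝ ∞ (Δ^[m] f) := contDiff_iterate_laplacian hf m
    have hn : ContDiff ℝ 2 (iteratedFDeriv ℝ n (Δ^[m] f)) :=
      (contDiff_infty.1 hm (2 + n)).iteratedFDeriv_right (by norm_cast)
    have hΔ : RapidlyDecreasing (Δ (iteratedFDeriv ℝ n (Δ^[m] f))) := by
      rw [laplacian_iteratedFDeriv hm, ← Function.iterate_succ_apply' (Δ)]
      exact ih (m + 1)
    simpa [RapidlyDecreasing, norm_fderiv_iteratedFDeriv] using (ih m).fderiv hn hΔ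

theorem iterate_laplacian_coe (ψ : 𝓢(E, F)) (m : ℕ) : Δ^[m] ⇑ψ = ⇑(Δ^[m] ψ) := by
  induction m with
  | zero => rfl
  | succ m ih =>
    rw [Function.iterate_succ_apply', Function.iterate_succ_apply', ih]
    exact (funext (SchwartzMap.laplacian_apply _)).symm

theorem schwartz_iff_laplacian_decay_general {φ : E → F} (hφ : ContDiff ℝ ∞ φ) :
    (∃ ψ : 𝓢(E, F), ⇑ψ = φ) ↔ ∀ m, RapidlyDecreasing (Δ^[m] φ) := by
  constructor
  · rintro ⟨ψ, rfl⟩ m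
    exact iterate_laplacian_coe ψ m ▸ rapidlyDecreasing_schwartzMap _
  · intro h
    refine ⟨⟨φ, hφ, fun k n => ?_⟩, rfl⟩
    obtain ⟨C, hC⟩ := rapidlyDecreasing_iteratedFDeriv_iterate_laplacian hφ h n 0 k
    refine ⟨C, fun x => ?_⟩
    calc
      ‖x‖ ^ k * ‖iteratedFDeriv ℝ n φ x‖ ≤ (1 + ‖x‖) ^ k * ‖iteratedFDeriv ℝ n φ x‖ := by
        gcongr
        exact le_add_of_nonneg_left zero_le_one
      _ ≤ C := hC x

end Decay

theorem lap_eq_laplacian (d : ℕ) : lap d = Δ := by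
  ext φ x
  simp [lap, laplacian_eq_sum_fderiv_fderiv (EuclideanSpace.basisFun (Fin d) ℝ),
    iteratedFDeriv_two_apply]

theorem schwartz_iff_laplacian_decay
    (d : ℕ) (φ : EuclideanSpace ℝ (Fin d) → ℂ)
    (hφ : ContDiff ℝ (⊤ : ℕ∞) φ) :
    (∃ ψ : SchwartzMap (EuclideanSpace ℝ (Fin d)) ℂ, ⇑ψ = φ) ↔
      (∀ m ℓ : ℕ, ∃ C : ℝ,
        ∀ x : EuclideanSpace ℝ (Fin d),
          (1 + ‖x‖) ^ ℓ * ‖(lap d)^[m] φ x‖ ≤ C) := by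
  rw [lap_eq_laplacian]
  exact schwartz_iff_laplacian_decay_general hφ
end
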